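/- For any positive integers a and b and every n ≥ 1, the Hankel determinant det_{1≤i,j≤n}(ζ(a(i+j-1)+b)) is strictly positive. -/

import Mathlib

/-!
Write `ζ(a(k+1)+b) = ∑ₘ wₘ tₘᵏ` with weights `wₘ = (m+1)^(-(a+b)) > 0` and pairwise distinct nodes
`tₘ = (m+1)^(-a)`. The quadratic form of the Hankel matrix of these moments at a vector `x` is
`∑ₘ wₘ p(tₘ)²`, where `p = ∑ᵢ xᵢ Xⁱ`. A nonzero `p` of degree `< n` cannot vanish at `n` distinct
nodes, so the form is positive definite and its determinant is positive.
-/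

open Matrix

/-- The `n × n` Hankel matrix of a sequence `c`, indexed from zero: its `(i, j)` entry is
`c (i + j)`. -/
def hankelMatrix {R : Type*} (c : ℕ → R) (n : ℕ) : Matrix (Fin n) (Fin n) R :=
  Matrix.of fun i j => c (i + j)

theorem hankelMatrix_isSymm {R : Type*} (c : ℕ → R) (n : ℕ) : (hankelMatrix c n).IsSymm :=
  Matrix.IsSymm.ext fun i j => congrArg c (add_comm (j : ℕ) i)

theorem hankelMatrix_map {R S : Type*} (f : R → S) (c : ℕ → R) (n : ℕ) :
    (hankelMatrix c n).map f = hankelMatrix (fun k => f (c k)) n :=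
  rfl

theorem hasSum_dotProduct_hankelMatrix_mulVec {ι R : Type*} [CommSemiring R] [TopologicalSpace R]
    [IsTopologicalSemiring R] {w t : ι → R} {c : ℕ → R}
    (hc : ∀ k, HasSum (fun m => w m * t m ^ k) (c k)) {n : ℕ} (x : Fin n → R) :
    HasSum (fun m => w m * (∑ i : Fin n, t m ^ (i : ℕ) * x i) ^ 2)
      (x ⬝ᵥ hankelMatrix c n *ᵥ x) := by
  have expand_sq (m : ι) : w m * (∑ i : Fin n, t m ^ (i : ℕ) * x i) ^ 2 =
      ∑ i : Fin n, ∑ j : Fin n, x i * (w m * t m ^ (i + j : ℕ) * x j) := by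
    rw [sq, Finset.sum_mul_sum, Finset.mul_sum]
    refine Finset.sum_congr rfl fun i _ => ?_
    rw [Finset.mul_sum]
    exact Finset.sum_congr rfl fun j _ => by ring
  simp only [expand_sq, dotProduct, mulVec, hankelMatrix, Matrix.of_apply, Finset.mul_sum]
  exact hasSum_sum fun i _ => hasSum_sum fun j _ => ((hc (i + j)).mul_right (x j)).mul_left (x i)

theorem exists_mem_sum_pow_mul_ne_zero {R : Type*} [CommRing R] [IsDomain R] {T : Set R} {n : ℕ}
    (hT : (n : ℕ∞) ≤ T.encard) {x : Fin n → R} (hx : x ≠ 0) :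
    ∃ s ∈ T, ∑ i : Fin n, s ^ (i : ℕ) * x i ≠ 0 := by
  by_contra! hvanish
  obtain ⟨S, hST, hS⟩ := Set.exists_subset_encard_eq hT
  have : Finite S := Set.finite_of_encard_eq_coe hS
  have hcard : Nat.card S = n := by
    rw [Nat.card_coe_set_eq, Set.ncard, hS, ENat.toNat_natCast]
  let e : Fin n ≃ S := (Finite.equivFinOfCardEq hcard).symm
  exact hx <| eq_zero_of_forall_index_sum_pow_mul_eq_zero
    (Subtype.val_injective.comp e.injective) fun k => hvanish _ (hST (e k).2)

theorem posDef_hankelMatrix_of_hasSum {ι : Type*} {w t : ι → ℝ} {c : ℕ → ℝ} {n : ℕ}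
    (hw : ∀ m, 0 ≤ w m) (hc : ∀ k, HasSum (fun m => w m * t m ^ k) (c k))
    (ht : (n : ℕ∞) ≤ (t '' Function.support w).encard) : (hankelMatrix c n).PosDef := by
  refine .of_dotProduct_mulVec_pos ?_ fun x hx => ?_
  · exact (conjTranspose_eq_transpose_of_trivial _).trans (hankelMatrix_isSymm c n)
  obtain ⟨_, ⟨m, hm, rfl⟩, hne⟩ := exists_mem_sum_pow_mul_ne_zero ht hx
  have hsum := hasSum_dotProduct_hankelMatrix_mulVec hc x
  have hwm : 0 < w m := (hw m).lt_of_ne' hm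
  rw [star_trivial, ← hsum.tsum_eq]
  exact hsum.summable.tsum_pos (fun k => mul_nonneg (hw k) (sq_nonneg _)) m (by positivity)

theorem summable_nat_add_one_rpow_neg {s : ℝ} (hs : 1 < s) :
    Summable fun m : ℕ => (m + 1 : ℝ) ^ (-s) := by
  simpa using (summable_nat_add_iff 1).2 (Real.summable_nat_rpow.2 (neg_lt_neg hs))

theorem riemannZeta_ofReal_eq_tsum {s : ℝ} (hs : 1 < s) :
    riemannZeta s = (∑' m : ℕ, (m + 1 : ℝ) ^ (-s) : ℝ) := by
  rw [zeta_eq_tsum_one_div_nat_add_one_cpow (by simpa using hs), Complex.ofReal_tsum]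
  refine tsum_congr fun m => ?_
  rw [Complex.ofReal_cpow (by positivity), Complex.ofReal_neg, Complex.cpow_neg, one_div]
  push_cast
  rfl

theorem injective_nat_add_one_rpow_neg {a : ℝ} (ha : a ≠ 0) :
    Function.Injective fun m : ℕ => (m + 1 : ℝ) ^ (-a) := fun k l hkl => by
  have hcast : (k + 1 : ℝ) = l + 1 :=
    (Real.rpow_left_inj (by positivity) (by positivity) (neg_ne_zero.2 ha)).1 hkl
  exact_mod_cast add_right_cancel hcast

theorem posDef_hankelMatrix_tsum_rpow_neg {a b : ℝ} (ha : 0 < a) (hab : 1 < a + b) (n : ℕ) :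
    (hankelMatrix (fun k => ∑' m : ℕ, (m + 1 : ℝ) ^ (-(a * (k + 1) + b))) n).PosDef := by
  have hpos (m : ℕ) : (0 : ℝ) < m + 1 := by positivity
  refine posDef_hankelMatrix_of_hasSum (w := fun m : ℕ => (m + 1 : ℝ) ^ (-(a + b)))
    (t := fun m : ℕ => (m + 1 : ℝ) ^ (-a)) (fun m => by positivity) (fun k => ?_) ?_
  · have hfactor (m : ℕ) : (m + 1 : ℝ) ^ (-(a + b)) * ((m + 1 : ℝ) ^ (-a)) ^ k =
        (m + 1 : ℝ) ^ (-(a * (k + 1) + b)) := by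
      rw [← Real.rpow_mul_natCast (hpos m).le, ← Real.rpow_add (hpos m)]
      ring_nf
    simp only [hfactor]
    exact (summable_nat_add_one_rpow_neg (by nlinarith [k.cast_nonneg (α := ℝ)])).hasSum
  · have hsupport : Function.support (fun m : ℕ => (m + 1 : ℝ) ^ (-(a + b))) = Set.univ :=
      Function.support_eq_univ fun m => (Real.rpow_pos_of_pos (hpos m) _).ne'
    rw [hsupport, (injective_nat_add_one_rpow_neg ha.ne').encard_image, Set.encard_univ]
    simp

theorem hankel_det_zeta_progression_pos_general {a b : ℝ} (ha : 0 < a) (hab : 1 < a + b) (n : ℕ) :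
    ∃ d : ℝ, Matrix.det (Matrix.of fun i j : Fin n =>
        riemannZeta ((a * ((i : ℕ) + (j : ℕ) + 1) + b : ℝ) : ℂ)) = (d : ℂ) ∧ 0 < d := by
  refine ⟨_, ?_, (posDef_hankelMatrix_tsum_rpow_neg ha hab n).det_pos⟩
  rw [← Complex.ofRealHom_eq_coe, RingHom.map_det, RingHom.mapMatrix_apply, hankelMatrix_map]
  congr 1
  ext i j
  have hexp : 1 < a * ((i : ℕ) + (j : ℕ) + 1 : ℝ) + b := by
    have : 0 ≤ a * ((i : ℕ) + (j : ℕ) : ℝ) := by positivity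
    linarith
  simp only [hankelMatrix, Matrix.of_apply, riemannZeta_ofReal_eq_tsum hexp,
    Complex.ofRealHom_eq_coe, Nat.cast_add]

/-- For positive integers `a, b` and every `n ≥ 1`, the Hankel determinant
`det_{1≤i,j≤n} (ζ(a(i+j-1)+b))` is a strictly positive real number. With zero-based
indexing `i, j : Fin n`, the `(i,j)` entry is `ζ(a(i+j+1)+b)`. -/
theorem hankel_det_zeta_progression_pos
    (a b : ℕ) (ha : 0 < a) (hb : 0 < b) (n : ℕ) (hn : 1 ≤ n) :
    ∃ d : ℝ, Matrix.det (Matrix.of fun i j : Fin n =>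
        riemannZeta ((a * ((i : ℕ) + (j : ℕ) + 1) + b : ℕ) : ℂ)) = (d : ℂ) ∧ 0 < d := by
  have hab : (1 : ℝ) < a + b := by exact_mod_cast (by omega : 1 < a + b)
  simpa using hankel_det_zeta_progression_pos_general (Nat.cast_pos.2 ha) hab n
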